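/- arXiv:2003.05572 — 3 statements merged into one kernel-verified Lean document; each statement's English description precedes it below -/
import Mathlib

section
/- For every x ∈ ℝⁿ and ε > 0, the function t ↦ t^{n/2} w_ε(x,t) is strictly monotone increasing on (0,+∞); equivalently, t ↦ S_ε(x,t) − (nε/2) ln t is strictly monotone decreasing on (0,+∞). -/
/-!
Multiplying by `t ^ (n / 2)` cancels the time dependence of the normalising factor, so up to a
positive constant `t ^ (n / 2) * w_ε(x, t)` is the bare integral of
`exp (-‖x - y‖ ^ 2 / (2 * t * ε)) * exp (-J y / ε)`. This integrand is nondecreasing in `t`, and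
strictly increasing at every `y ≠ x` where `J` is finite. The integral therefore increases strictly
once it converges, and it does converge as soon as `J` has an affine minorant, since a Gaussian
absorbs the exponential of any affine function. The claim about `S_ε` follows by applying the
decreasing function `-ε * log`.
-/

open scoped Topology
open Filter MeasureTheory

/-- The integrand `exp(−(‖x−y‖²/(2t) + J(y))/ε)`, with the convention `exp(−∞) = 0`. -/
noncomputable def heatIntegrand (n : ℕ) (J : EuclideanSpace ℝ (Fin n) → EReal)
    (x : EuclideanSpace ℝ (Fin n)) (t ε : ℝ) (y : EuclideanSpace ℝ (Fin n)) : ℝ :=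
  if J y = ⊤ then 0 else Real.exp (-((‖x - y‖ ^ 2 / (2 * t) + (J y).toReal) / ε))

/-- `w_ε(x,t) = (2πtε)^{−n/2} ∫ exp(−(‖x−y‖²/(2t) + J(y))/ε) dy`. -/
noncomputable def heatSol (n : ℕ) (J : EuclideanSpace ℝ (Fin n) → EReal)
    (x : EuclideanSpace ℝ (Fin n)) (t ε : ℝ) : ℝ :=
  (2 * Real.pi * t * ε) ^ (-(n : ℝ) / 2) * ∫ y, heatIntegrand n J x t ε y

/-- `S_ε(x,t) = −ε ln w_ε(x,t)`. -/
noncomputable def viscSol (n : ℕ) (J : EuclideanSpace ℝ (Fin n) → EReal)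
    (x : EuclideanSpace ℝ (Fin n)) (t ε : ℝ) : ℝ :=
  -ε * Real.log (heatSol n J x t ε)

section HeatSol

open scoped RealInnerProductSpace

theorem integral_lt_integral_of_ae_le_of_frequently_lt {α : Type*} [MeasurableSpace α]
    {μ : Measure α} {f g : α → ℝ} (hf : Integrable f μ) (hg : Integrable g μ) (hfg : f ≤ᵐ[μ] g)
    (hlt : ∃ᵐ a ∂μ, f a < g a) : ∫ a, f a ∂μ < ∫ a, g a ∂μ := by
  refine (integral_mono_ae hf hg hfg).lt_of_ne fun heq => hlt ?_
  filter_upwards [(integral_eq_iff_of_ae_le hf hg hfg).1 heq] with a ha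
  exact ha.not_lt

theorem integrable_exp_neg_mul_sq_norm_add_inner {V : Type*} [NormedAddCommGroup V]
    [InnerProductSpace ℝ V] [FiniteDimensional ℝ V] [MeasurableSpace V] [BorelSpace V] {b : ℝ}
    (hb : 0 < b) (w : V) : Integrable fun v : V => Real.exp (-b * ‖v‖ ^ 2 + ⟪w, v⟫) := by
  have hcexp := GaussianFourier.integrable_cexp_neg_mul_sq_norm_add (b := b)
    (by rwa [Complex.ofReal_re]) 1 w
  refine hcexp.norm.congr (Eventually.of_forall fun v => ?_)
  simp only [Complex.norm_exp]
  norm_cast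
  rw [one_mul]

variable {n : ℕ} {J : EuclideanSpace ℝ (Fin n) → EReal} {x : EuclideanSpace ℝ (Fin n)} {t ε : ℝ}

theorem heatIntegrand_nonneg (y : EuclideanSpace ℝ (Fin n)) : 0 ≤ heatIntegrand n J x t ε y := by
  unfold heatIntegrand
  split_ifs <;> positivity

theorem measurable_heatIntegrand (hJ : Measurable J) : Measurable (heatIntegrand n J x t ε) := by
  have := hJ.ereal_toReal
  exact .ite (hJ (measurableSet_singleton ⊤)) measurable_const (by fun_prop)

theorem heatIntegrand_le_exp_of_le (hε : 0 ≤ ε) {r : ℝ} {y : EuclideanSpace ℝ (Fin n)}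
    (hr : (r : EReal) ≤ J y) :
    heatIntegrand n J x t ε y ≤ Real.exp (-((‖x - y‖ ^ 2 / (2 * t) + r) / ε)) := by
  unfold heatIntegrand
  split_ifs with hy
  · positivity
  · have : r ≤ (J y).toReal := EReal.toReal_le_toReal hr (EReal.coe_ne_bot r) hy
    gcongr

theorem integrable_heatIntegrand (hJ : Measurable J) {v : EuclideanSpace ℝ (Fin n)} {a : ℝ}
    (hJ_minorant : ∀ y, ((⟪v, y⟫ + a : ℝ) : EReal) ≤ J y) (ht : 0 < t) (hε : 0 < ε) :
    Integrable (heatIntegrand n J x t ε) := by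
  have hgauss := ((integrable_exp_neg_mul_sq_norm_add_inner (b := 1 / (2 * t * ε)) (by positivity)
    (ε⁻¹ • v)).comp_sub_left x).const_mul (Real.exp (-((⟪v, x⟫ + a) / ε)))
  refine hgauss.mono' (measurable_heatIntegrand hJ).aestronglyMeasurable
    (Eventually.of_forall fun y => ?_)
  rw [Real.norm_of_nonneg (heatIntegrand_nonneg y)]
  refine (heatIntegrand_le_exp_of_le hε.le (hJ_minorant y)).trans_eq ?_
  rw [← Real.exp_add, real_inner_smul_left, inner_sub_right]
  congr 1
  field

theorem monotoneOn_heatIntegrand (hε : 0 ≤ ε) (y : EuclideanSpace ℝ (Fin n)) :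
    MonotoneOn (fun t => heatIntegrand n J x t ε y) (Set.Ioi 0) := by
  intro s (hs : 0 < s) t _ hst
  simp only [heatIntegrand]
  split_ifs
  · rfl
  · gcongr

theorem strictMonoOn_heatIntegrand (hε : 0 < ε) {y : EuclideanSpace ℝ (Fin n)} (hy : J y ≠ ⊤)
    (hyx : y ≠ x) : StrictMonoOn (fun t => heatIntegrand n J x t ε y) (Set.Ioi 0) := by
  intro s (hs : 0 < s) t _ hst
  have hnorm : 0 < ‖x - y‖ := norm_pos_iff.2 (sub_ne_zero.2 hyx.symm)
  simp only [heatIntegrand, if_neg hy]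
  gcongr

theorem strictMonoOn_integral_heatIntegrand (hn : 1 ≤ n)
    (hint : ∀ t, 0 < t → Integrable (heatIntegrand n J x t ε)) (hJ_dom : ∃ᵐ y, J y ≠ ⊤)
    (hε : 0 < ε) : StrictMonoOn (fun t => ∫ y, heatIntegrand n J x t ε y) (Set.Ioi 0) := by
  intro s hs t ht hst
  have : Nonempty (Fin n) := ⟨⟨0, hn⟩⟩
  have hne : ∀ᵐ y, y ≠ x := compl_mem_ae_iff.2 (measure_singleton x)
  exact integral_lt_integral_of_ae_le_of_frequently_lt (hint s hs) (hint t ht)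
    (Eventually.of_forall fun y => monotoneOn_heatIntegrand hε.le y hs ht hst.le)
    ((hJ_dom.and_eventually hne).mono fun _ hy =>
      strictMonoOn_heatIntegrand hε hy.1 hy.2 hs ht hst)

theorem heatSol_nonneg (ht : 0 ≤ t) (hε : 0 ≤ ε) : 0 ≤ heatSol n J x t ε :=
  mul_nonneg (by positivity) (integral_nonneg heatIntegrand_nonneg)

theorem rpow_mul_heatSol (ht : 0 < t) (hε : 0 ≤ ε) :
    t ^ ((n : ℝ) / 2) * heatSol n J x t ε =
      (2 * Real.pi * ε) ^ (-(n : ℝ) / 2) * ∫ y, heatIntegrand n J x t ε y := by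
  have hcancel : t ^ ((n : ℝ) / 2) * t ^ (-(n : ℝ) / 2) = 1 := by
    rw [neg_div, Real.rpow_neg ht.le, mul_inv_cancel₀ (Real.rpow_pos_of_pos ht _).ne']
  rw [heatSol, mul_right_comm _ t ε, Real.mul_rpow (by positivity) ht.le]
  linear_combination
    ((2 * Real.pi * ε) ^ (-(n : ℝ) / 2) * ∫ y, heatIntegrand n J x t ε y) * hcancel

theorem viscSol_sub_log (ht : 0 < t) (hw : heatSol n J x t ε ≠ 0) :
    viscSol n J x t ε - n * ε / 2 * Real.log t =
      -ε * Real.log (t ^ ((n : ℝ) / 2) * heatSol n J x t ε) := by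
  rw [viscSol, Real.log_mul (Real.rpow_pos_of_pos ht _).ne' hw, Real.log_rpow ht]
  ring

theorem strictMonoOn_rpow_mul_heatSol (hn : 1 ≤ n)
    (hint : ∀ t, 0 < t → Integrable (heatIntegrand n J x t ε)) (hJ_dom : ∃ᵐ y, J y ≠ ⊤)
    (hε : 0 < ε) :
    StrictMonoOn (fun t => t ^ ((n : ℝ) / 2) * heatSol n J x t ε) (Set.Ioi 0) := by
  have hconst : 0 < (2 * Real.pi * ε) ^ (-(n : ℝ) / 2) := by positivity
  exact ((strictMono_mul_left_of_pos hconst).comp_strictMonoOn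
    (strictMonoOn_integral_heatIntegrand hn hint hJ_dom hε)).congr
      fun _ ht => (rpow_mul_heatSol ht hε.le).symm

theorem heatSol_pos_of_strictMonoOn (hε : 0 ≤ ε)
    (hmono : StrictMonoOn (fun t => t ^ ((n : ℝ) / 2) * heatSol n J x t ε) (Set.Ioi 0))
    (ht : 0 < t) : 0 < heatSol n J x t ε := by
  have hlt := hmono (Set.mem_Ioi.2 (half_pos ht)) (Set.mem_Ioi.2 ht) (half_lt_self ht)
  have hhalf : 0 ≤ (t / 2) ^ ((n : ℝ) / 2) * heatSol n J x (t / 2) ε :=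
    mul_nonneg (by positivity) (heatSol_nonneg (by positivity) hε)
  exact pos_of_mul_pos_right (hhalf.trans_lt hlt) (by positivity)

theorem strictAntiOn_viscSol_sub_log_of_strictMonoOn (hε : 0 < ε)
    (hmono : StrictMonoOn (fun t => t ^ ((n : ℝ) / 2) * heatSol n J x t ε) (Set.Ioi 0)) :
    StrictAntiOn (fun t => viscSol n J x t ε - n * ε / 2 * Real.log t) (Set.Ioi 0) := by
  have hw (t : ℝ) (ht : 0 < t) : 0 < heatSol n J x t ε :=
    heatSol_pos_of_strictMonoOn hε.le hmono ht
  have hpos : Set.MapsTo (fun t => t ^ ((n : ℝ) / 2) * heatSol n J x t ε) (Set.Ioi 0)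
      (Set.Ioi 0) := fun t ht => mul_pos (Real.rpow_pos_of_pos ht _) (hw t ht)
  exact ((strictAnti_mul_left (neg_lt_zero.2 hε)).comp_strictMonoOn
    (Real.strictMonoOn_log.comp hmono hpos)).congr
      fun t ht => (viscSol_sub_log ht (hw t ht).ne').symm

theorem heatSol_strictMono_in_time_general (hn : 1 ≤ n) (hJ : Measurable J)
    {v : EuclideanSpace ℝ (Fin n)} {a : ℝ}
    (hJ_minorant : ∀ y, ((⟪v, y⟫ + a : ℝ) : EReal) ≤ J y) (hJ_dom : ∃ᵐ y, J y ≠ ⊤)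
    (x : EuclideanSpace ℝ (Fin n)) (hε : 0 < ε) :
    StrictMonoOn (fun t => t ^ ((n : ℝ) / 2) * heatSol n J x t ε) (Set.Ioi 0) ∧
      StrictAntiOn (fun t => viscSol n J x t ε - n * ε / 2 * Real.log t) (Set.Ioi 0) := by
  have hmono := strictMonoOn_rpow_mul_heatSol (x := x) hn
    (fun _ ht => integrable_heatIntegrand hJ hJ_minorant ht hε) hJ_dom hε
  exact ⟨hmono, strictAntiOn_viscSol_sub_log_of_strictMonoOn hε hmono⟩

end HeatSol

/-- For every `x` and `ε > 0`, the function `t ↦ t^{n/2} w_ε(x,t)` is strictly monotone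
increasing on `(0,∞)`; equivalently, `t ↦ S_ε(x,t) − (nε/2) ln t` is strictly monotone
decreasing on `(0,∞)`. -/
theorem heatSol_strictMono_in_time (n : ℕ) (hn : 1 ≤ n)
    (J : EuclideanSpace ℝ (Fin n) → EReal)
    (hJ_proper_bot : ∀ y, J y ≠ ⊥)
    (hJ_lsc : LowerSemicontinuous J)
    (hJ_convex : ∀ y₁ y₂ : EuclideanSpace ℝ (Fin n), ∀ a b : ℝ, 0 ≤ a → 0 ≤ b → a + b = 1 →
      J (a • y₁ + b • y₂) ≤ (a : EReal) * J y₁ + (b : EReal) * J y₂)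
    (hJ_int : (interior {y : EuclideanSpace ℝ (Fin n) | J y ≠ ⊤}).Nonempty)
    (hJ_inf : (⨅ y : EuclideanSpace ℝ (Fin n), J y) = (0 : EReal))
    (x : EuclideanSpace ℝ (Fin n)) (ε : ℝ) (hε : 0 < ε) :
    StrictMonoOn (fun t : ℝ => t ^ ((n : ℝ) / 2) * heatSol n J x t ε) (Set.Ioi 0) ∧
    StrictAntiOn (fun t : ℝ => viscSol n J x t ε - n * ε / 2 * Real.log t) (Set.Ioi 0) := by
  have hJ_nonneg : ∀ y, 0 ≤ J y := fun y => hJ_inf ▸ iInf_le J y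
  have hJ_dom : ∃ᵐ y, J y ≠ ⊤ :=
    frequently_ae_iff.2 (Measure.measure_pos_of_nonempty_interior volume hJ_int).ne'
  exact heatSol_strictMono_in_time_general hn hJ_lsc.measurable (v := 0) (a := 0)
    (by simpa using hJ_nonneg) hJ_dom x hε
end

section
/- Suppose in addition that J is strongly convex with parameter m ≥ 0 (the case m = 0 being plain convexity). Then for every x ∈ ℝⁿ, t > 0 and ε > 0, the posterior mean squared error satisfies the optimal bound E_J[‖y − u_PM(x,t,ε)‖²] ≤ ntε/(1 + mt). -/
open scoped Topology
open Filter MeasureTheory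

/-- The partition function `Z_J(x,t,ε) = ∫ exp(−(‖x−y‖²/(2t) + J(y))/ε) dy`. -/
noncomputable def partitionFn (n : ℕ) (J : EuclideanSpace ℝ (Fin n) → EReal)
    (x : EuclideanSpace ℝ (Fin n)) (t ε : ℝ) : ℝ :=
  ∫ y, heatIntegrand n J x t ε y

/-- The posterior mean estimate `u_PM(x,t,ε) = E_J[y]`. -/
noncomputable def postMean (n : ℕ) (J : EuclideanSpace ℝ (Fin n) → EReal)
    (x : EuclideanSpace ℝ (Fin n)) (t ε : ℝ) : EuclideanSpace ℝ (Fin n) :=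
  (partitionFn n J x t ε)⁻¹ • ∫ y, heatIntegrand n J x t ε y • y

/-!
With `κ = 1/t + m`, the energy `W y = ‖x - y‖² / (2t) + J y` is `κ`-strongly convex, so it attains
its minimum at some `c`. Write `f = exp (-W/ε)`, `Z = ∫ f` and `I = ∫ f ‖y - c‖²`. Strong convexity
along segments issuing from `c` yields, for `0 ≤ r ≤ 1`,
`f y * (1 + (1 - r²) κ/(2ε) ‖y - c‖²) ≤ f (c + r (y - c))`.
Integrating and undoing the dilation, `r ↦ rⁿ (Z + (1 - r²) κ/(2ε) I)` is maximal on `[0, 1]` at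
`r = 1`; its derivative there is `n Z - κ/ε I`, whence `I / Z ≤ n ε / κ`. Replacing `c` by the mean
only decreases the second moment.
-/

open Module (finrank)

section StrongConvexity

variable {E : Type*} [NormedAddCommGroup E] [NormedSpace ℝ E] {s : Set E} {κ : ℝ} {f : E → ℝ}

theorem add_sq_norm_sub_le_of_strongConvexOn_of_isMinOn (hf : StrongConvexOn s κ f) {c y : E}
    (hc : c ∈ s) (hmin : IsMinOn f s c) (hy : y ∈ s) : f c + κ / 2 * ‖y - c‖ ^ 2 ≤ f y := by
  have hsegment : ∀ b ∈ Set.Ioo (0 : ℝ) 1, f c + (1 - b) * (κ / 2 * ‖y - c‖ ^ 2) ≤ f y := by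
    rintro b ⟨hb0, hb1⟩
    have ha0 : 0 ≤ 1 - b := by linarith
    have hmid : f c ≤ f (b • y + (1 - b) • c) := hmin (hf.1 hy hc hb0.le ha0 (by ring))
    have hconv := hf.2 hy hc hb0.le ha0 (by ring)
    simp only [smul_eq_mul] at hconv
    exact le_of_mul_le_mul_left (by linarith) hb0
  have hlim : Tendsto (fun b : ℝ => f c + (1 - b) * (κ / 2 * ‖y - c‖ ^ 2)) (𝓝[>] 0)
      (𝓝 (f c + (1 - 0) * (κ / 2 * ‖y - c‖ ^ 2))) :=
    (Continuous.tendsto (by fun_prop) 0).mono_left nhdsWithin_le_nhds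
  rw [sub_zero, one_mul] at hlim
  exact le_of_tendsto hlim (eventually_of_mem (Ioo_mem_nhdsGT one_pos) hsegment)

theorem le_of_strongConvexOn_of_le_norm_sub (hf : StrongConvexOn s κ f) (hκ : 0 < κ) {a y : E}
    {M : ℝ} (ha : a ∈ s) (hM : ∀ z ∈ s, ‖z - a‖ ≤ 1 → M ≤ f z) (hy : y ∈ s)
    (hya : 1 + 2 * (f a - M) / κ ≤ ‖y - a‖) : f a ≤ f y := by
  set r := ‖y - a‖
  have hMa : M ≤ f a := hM a ha (by simp)
  have hr1 : 1 ≤ r := (le_add_of_nonneg_right (by have := sub_nonneg.2 hMa; positivity)).trans hya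
  have hr0 : 0 < r := by linarith
  have hinv : 0 ≤ 1 - r⁻¹ := sub_nonneg.2 (inv_le_one_of_one_le₀ hr1)
  -- Strong convexity on `[a, y]` is tested at the point at distance `1` from `a`.
  have hnorm : ‖r⁻¹ • y + (1 - r⁻¹) • a - a‖ ≤ 1 := by
    rw [show r⁻¹ • y + (1 - r⁻¹) • a - a = r⁻¹ • (y - a) by module, norm_smul,
      Real.norm_of_nonneg (by positivity), inv_mul_cancel₀ hr0.ne']
  have hmid := (hM _ (hf.1 hy ha (by positivity) hinv (by ring)) hnorm).trans
    (hf.2 hy ha (by positivity) hinv (by ring))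
  have hscaled : r * M ≤ f y + (r - 1) * f a - κ / 2 * (r - 1) * r := by
    calc r * M ≤ r * (r⁻¹ * f y + (1 - r⁻¹) * f a - r⁻¹ * (1 - r⁻¹) * (κ / 2 * r ^ 2)) :=
          mul_le_mul_of_nonneg_left hmid hr0.le
      _ = f y + (r - 1) * f a - κ / 2 * (r - 1) * r := by field_simp
  have hfar : 2 * (f a - M) ≤ κ * (r - 1) := by
    rw [← div_le_iff₀' hκ]; linarith
  nlinarith

theorem strongConvexOn_sq_norm_sub {E : Type*} [NormedAddCommGroup E] [InnerProductSpace ℝ E]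
    {s : Set E} (hs : Convex ℝ s) (m : ℝ) (x : E) :
    StrongConvexOn s m (fun y => m / 2 * ‖x - y‖ ^ 2) := by
  have haffine : ConvexOn ℝ s (fun y => innerSL ℝ (-m • x) y + m / 2 * ‖x‖ ^ 2) :=
    ((innerSL ℝ (-m • x)).toLinearMap.convexOn hs).add_const _
  refine strongConvexOn_iff_convex.2 (haffine.congr fun y _ => ?_)
  simp only [innerSL_apply_apply, real_inner_smul_left, norm_sub_sq_real]
  ring

end StrongConvexity

theorem two_mul_le_of_forall_pow_mul_add_le {d : ℕ} {Z a : ℝ}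
    (h : ∀ r : ℝ, 0 < r → r ≤ 1 → r ^ d * (Z + (1 - r ^ 2) * a) ≤ Z) : 2 * a ≤ d * Z := by
  set g : ℝ → ℝ := fun r => r ^ d * (Z + (1 - r ^ 2) * a)
  have hmax : IsLocalMaxOn g (Set.Icc (1 / 2) 1) 1 := by
    refine IsMaxOn.localize fun r hr => ?_
    simpa [g] using h r (one_half_pos.trans_le hr.1) hr.2
  have hderiv : HasDerivAt g (d * Z - 2 * a) 1 := by
    have hfactor := (((hasDerivAt_pow 2 (1 : ℝ)).const_sub 1).mul_const a).const_add Z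
    refine ((hasDerivAt_pow d (1 : ℝ)).mul hfactor).congr_deriv ?_
    simp only [one_pow]
    ring
  have hcone : (1 / 2 - 1 : ℝ) ∈ posTangentConeAt (Set.Icc (1 / 2) 1) (1 : ℝ) :=
    sub_mem_posTangentConeAt_of_segment_subset (by rw [segment_symm, segment_eq_Icc (by norm_num)])
  have hsign := hmax.hasFDerivWithinAt_nonpos hderiv.hasFDerivAt.hasFDerivWithinAt hcone
  rw [ContinuousLinearMap.toSpanSingleton_apply, smul_eq_mul] at hsign
  linarith

section ExtendedReal

/-- The effective domain `dom J` of an extended-real function that avoids `-∞`. -/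
def effectiveDomain {X : Type*} (J : X → EReal) : Set X := {x | J x ≠ ⊤}

theorem exists_isMinOn_toReal_of_isCompact {X : Type*} [TopologicalSpace X] {W : X → EReal}
    {K : Set X} (hW : LowerSemicontinuousOn W K) (hbot : ∀ x, W x ≠ ⊥) (hK : IsCompact K)
    (hne : (effectiveDomain W ∩ K).Nonempty) :
    ∃ c ∈ effectiveDomain W ∩ K,
      IsMinOn (fun x => (W x).toReal) (effectiveDomain W ∩ K) c := by
  obtain ⟨a, haW, haK⟩ := hne
  obtain ⟨c, hcK, hc⟩ := hW.exists_isMinOn ⟨a, haK⟩ hK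
  have hcW : c ∈ effectiveDomain W := ((hc haK).trans_lt (Ne.lt_top haW)).ne
  exact ⟨c, ⟨hcW, hcK⟩, fun y hy => EReal.toReal_le_toReal (hc hy.2) (hbot c) hy.1⟩

variable {E : Type*} [NormedAddCommGroup E] [NormedSpace ℝ E]

theorem exists_isMinOn_toReal_of_strongConvexOn [FiniteDimensional ℝ E] {W : E → EReal} {κ : ℝ}
    (hlsc : LowerSemicontinuous W) (hbot : ∀ y, W y ≠ ⊥) (hne : (effectiveDomain W).Nonempty)
    (hκ : 0 < κ) (hconv : StrongConvexOn (effectiveDomain W) κ (fun y => (W y).toReal)) :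
    ∃ c ∈ effectiveDomain W, IsMinOn (fun y => (W y).toReal) (effectiveDomain W) c := by
  have := FiniteDimensional.proper ℝ E
  obtain ⟨a, ha⟩ := hne
  have hball {R : ℝ} (hR : 0 ≤ R) := exists_isMinOn_toReal_of_isCompact
    (hlsc.lowerSemicontinuousOn _) hbot (isCompact_closedBall a R)
    ⟨a, ha, Metric.mem_closedBall_self hR⟩
  obtain ⟨z, -, hz⟩ := hball zero_le_one
  set R := 1 + 2 * ((W a).toReal - (W z).toReal) / κ
  have hza : (W z).toReal ≤ (W a).toReal := hz ⟨ha, Metric.mem_closedBall_self zero_le_one⟩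
  have hR : 0 ≤ R := by have := sub_nonneg.2 hza; positivity
  obtain ⟨c, ⟨hcW, -⟩, hc⟩ := hball hR
  refine ⟨c, hcW, fun y hy => ?_⟩
  rcases le_total ‖y - a‖ R with hnear | hfar
  · exact hc ⟨hy, mem_closedBall_iff_norm.2 hnear⟩
  · have hca : (W c).toReal ≤ (W a).toReal := hc ⟨ha, Metric.mem_closedBall_self hR⟩
    exact hca.trans <| le_of_strongConvexOn_of_le_norm_sub hconv hκ ha
      (fun w hw hwa => hz ⟨hw, mem_closedBall_iff_norm.2 hwa⟩) hy hfar

theorem strongConvexOn_toReal_of_forall_le {J : E → EReal} {m : ℝ} (hbot : ∀ y, J y ≠ ⊥)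
    (h : ∀ y₁ y₂ : E, ∀ a b : ℝ, 0 ≤ a → 0 ≤ b → a + b = 1 →
      J (a • y₁ + b • y₂) ≤ (a : EReal) * J y₁ + (b : EReal) * J y₂
        - ((m / 2 * a * b * ‖y₁ - y₂‖ ^ 2 : ℝ) : EReal)) :
    StrongConvexOn (effectiveDomain J) m (fun y => (J y).toReal) := by
  have hreal : ∀ y ∈ effectiveDomain J, ∀ z ∈ effectiveDomain J, ∀ a b : ℝ, 0 ≤ a → 0 ≤ b →
      a + b = 1 → J (a • y + b • z) ≤ ((a * (J y).toReal + b * (J z).toReal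
        - m / 2 * a * b * ‖y - z‖ ^ 2 : ℝ) : EReal) := by
    intro y hy z hz a b ha hb hab
    simpa only [EReal.coe_sub, EReal.coe_add, EReal.coe_mul, EReal.coe_toReal hy (hbot y),
      EReal.coe_toReal hz (hbot z)] using h y z a b ha hb hab
  refine ⟨fun y hy z hz a b ha hb hab =>
    ((hreal y hy z hz a b ha hb hab).trans_lt (EReal.coe_lt_top _)).ne,
    fun y hy z hz a b ha hb hab => ?_⟩
  have hle := EReal.toReal_le_toReal (hreal y hy z hz a b ha hb hab) (hbot _) (EReal.coe_ne_top _)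
  simp only [EReal.toReal_coe] at hle
  simp only [smul_eq_mul]
  linarith

end ExtendedReal

section Integration

variable {E : Type*} [NormedAddCommGroup E] [NormedSpace ℝ E] [FiniteDimensional ℝ E]
  [MeasurableSpace E] [BorelSpace E] (μ : Measure E) [μ.IsAddHaarMeasure]

theorem integrable_norm_pow_mul_exp_neg_mul_sq_norm {b : ℝ} (hb : 0 < b) (k : ℕ) :
    Integrable (fun y : E => ‖y‖ ^ k * Real.exp (-b * ‖y‖ ^ 2)) μ := by
  cases subsingleton_or_nontrivial E
  · have hconst : (fun y : E => ‖y‖ ^ k * Real.exp (-b * ‖y‖ ^ 2)) =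
        fun _ => ‖(0 : E)‖ ^ k * Real.exp (-b * ‖(0 : E)‖ ^ 2) := by
      ext y; rw [Subsingleton.elim y 0]
    rw [hconst]
    exact integrable_const _
  · rw [integrable_fun_norm_addHaar μ (f := fun r => r ^ k * Real.exp (-b * r ^ 2))]
    have hexponent : (-1 : ℝ) < ((finrank ℝ E - 1 + k : ℕ) : ℝ) :=
      neg_one_lt_zero.trans_le (Nat.cast_nonneg _)
    simpa only [Real.rpow_natCast, smul_eq_mul, pow_add, mul_assoc] using
      integrableOn_rpow_mul_exp_neg_mul_sq hb hexponent

theorem integrable_comp_homothety {F : Type*} [NormedAddCommGroup F] {f : E → F}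
    (hf : Integrable f μ) (c : E) {r : ℝ} (hr : r ≠ 0) :
    Integrable (fun y => f (AffineMap.homothety c r y)) μ := by
  simp only [AffineMap.homothety_apply, vsub_eq_sub, vadd_eq_add]
  exact ((hf.comp_add_right c).comp_smul hr).comp_sub_right c

theorem integral_comp_homothety {F : Type*} [NormedAddCommGroup F] [NormedSpace ℝ F]
    (f : E → F) (c : E) (r : ℝ) :
    ∫ y, f (AffineMap.homothety c r y) ∂μ = |(r ^ finrank ℝ E)⁻¹| • ∫ y, f y ∂μ := by
  simp only [AffineMap.homothety_apply, vsub_eq_sub, vadd_eq_add]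
  rw [integral_sub_right_eq_self (fun y => f (r • y + c)),
    μ.integral_comp_smul (fun y => f (y + c)), integral_add_right_eq_self]

end Integration

section Steiner

variable {Ω E : Type*} [MeasurableSpace Ω] {μ : Measure Ω} [NormedAddCommGroup E]
  [InnerProductSpace ℝ E] [CompleteSpace E] {w : Ω → ℝ} {X : Ω → E} {c : E}

theorem integral_mul_sq_norm_sub_mean (hw : Integrable w μ)
    (hwX : Integrable (fun ω => w ω • (X ω - c)) μ)
    (hwX2 : Integrable (fun ω => w ω * ‖X ω - c‖ ^ 2) μ) (hZ : ∫ ω, w ω ∂μ ≠ 0) :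
    ∫ ω, w ω * ‖X ω - (∫ ω, w ω ∂μ)⁻¹ • ∫ ω, w ω • X ω ∂μ‖ ^ 2 ∂μ =
      ∫ ω, w ω * ‖X ω - c‖ ^ 2 ∂μ
        - (∫ ω, w ω ∂μ) * ‖(∫ ω, w ω ∂μ)⁻¹ • ∫ ω, w ω • X ω ∂μ - c‖ ^ 2 := by
  set Z := ∫ ω, w ω ∂μ
  set u := Z⁻¹ • ∫ ω, w ω • X ω ∂μ
  have hcentered : ∫ ω, w ω • (X ω - c) ∂μ = Z • (u - c) := by
    have hsplit : ∫ ω, w ω • X ω ∂μ = ∫ ω, w ω • (X ω - c) ∂μ + Z • c := by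
      rw [← integral_smul_const, ← integral_add hwX (hw.smul_const c)]
      simp only [smul_sub, sub_add_cancel]
    rw [smul_sub, smul_inv_smul₀ hZ, hsplit, add_sub_cancel_right]
  have hexpand : ∀ ω, w ω * ‖X ω - u‖ ^ 2 = w ω * ‖X ω - c‖ ^ 2
      - 2 * inner ℝ (u - c) (w ω • (X ω - c)) + w ω * ‖u - c‖ ^ 2 := by
    intro ω
    rw [← sub_sub_sub_cancel_right (X ω) u c, norm_sub_sq_real, real_inner_smul_right,
      real_inner_comm]
    ring
  have hcross := (hwX.const_inner (𝕜 := ℝ) (u - c)).const_mul 2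
  have hdiff : Integrable (fun ω => w ω * ‖X ω - c‖ ^ 2
      - 2 * inner ℝ (u - c) (w ω • (X ω - c))) μ := hwX2.sub hcross
  simp only [hexpand]
  rw [integral_add hdiff (hw.mul_const _), integral_sub hwX2 hcross,
    integral_const_mul, integral_mul_const, integral_inner hwX, hcentered, real_inner_smul_right,
    real_inner_self_eq_norm_sq]
  ring

end Steiner

section Gibbs

variable {E : Type*} {W : E → EReal} {κ ε : ℝ} {c : E}

/-- The unnormalised Gibbs density `exp (-W/ε)` of the energy `W` at temperature `ε`, extended by
`0` where `W = ∞`. -/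
noncomputable def gibbsWeight (W : E → EReal) (ε : ℝ) (y : E) : ℝ :=
  if W y = ⊤ then 0 else Real.exp (-(W y).toReal / ε)

theorem gibbsWeight_of_eq_top {y : E} (hy : W y = ⊤) : gibbsWeight W ε y = 0 := if_pos hy

theorem gibbsWeight_of_mem_effectiveDomain {y : E} (hy : y ∈ effectiveDomain W) :
    gibbsWeight W ε y = Real.exp (-(W y).toReal / ε) := if_neg hy

theorem gibbsWeight_nonneg (y : E) : 0 ≤ gibbsWeight W ε y := by
  unfold gibbsWeight; positivity

theorem support_gibbsWeight : Function.support (gibbsWeight W ε) = effectiveDomain W := by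
  ext y; simp [gibbsWeight, effectiveDomain, Real.exp_ne_zero]

theorem measurable_gibbsWeight [MeasurableSpace E] (hW : Measurable W) :
    Measurable (gibbsWeight W ε) :=
  Measurable.ite (hW (measurableSet_singleton ⊤)) measurable_const
    (hW.ereal_toReal.neg.div_const ε).exp

theorem integral_gibbsWeight_pos [TopologicalSpace E] [MeasurableSpace E]
    (μ : Measure E) [μ.IsOpenPosMeasure]
    (hint : (interior (effectiveDomain W)).Nonempty) (hi : Integrable (gibbsWeight W ε) μ) :
    0 < ∫ y, gibbsWeight W ε y ∂μ := by
  rw [integral_pos_iff_support_of_nonneg gibbsWeight_nonneg hi, support_gibbsWeight]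
  exact (isOpen_interior.measure_pos μ hint).trans_le (measure_mono interior_subset)

variable [NormedAddCommGroup E]

section Pointwise

variable [NormedSpace ℝ E]

theorem gibbsWeight_le_gaussian (hε : 0 < ε)
    (hconv : StrongConvexOn (effectiveDomain W) κ (fun y => (W y).toReal))
    (hc : c ∈ effectiveDomain W) (hmin : IsMinOn (fun y => (W y).toReal) (effectiveDomain W) c)
    (y : E) :
    gibbsWeight W ε y ≤
      Real.exp (-(W c).toReal / ε) * Real.exp (-(κ / (2 * ε)) * ‖y - c‖ ^ 2) := by
  by_cases hy : W y = ⊤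
  · rw [gibbsWeight_of_eq_top hy]; positivity
  · have hgrowth := add_sq_norm_sub_le_of_strongConvexOn_of_isMinOn hconv hc hmin hy
    rw [gibbsWeight_of_mem_effectiveDomain hy, ← Real.exp_add, Real.exp_le_exp]
    calc -(W y).toReal / ε ≤ -((W c).toReal + κ / 2 * ‖y - c‖ ^ 2) / ε := by gcongr
      _ = -(W c).toReal / ε + -(κ / (2 * ε)) * ‖y - c‖ ^ 2 := by field_simp; ring

theorem gibbsWeight_mul_le_comp_homothety (hε : 0 < ε)
    (hconv : StrongConvexOn (effectiveDomain W) κ (fun y => (W y).toReal))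
    (hc : c ∈ effectiveDomain W) (hmin : IsMinOn (fun y => (W y).toReal) (effectiveDomain W) c)
    {r : ℝ} (hr : r ∈ Set.Icc (0 : ℝ) 1) (y : E) :
    gibbsWeight W ε y * (1 + (1 - r ^ 2) * (κ / (2 * ε)) * ‖y - c‖ ^ 2) ≤
      gibbsWeight W ε (AffineMap.homothety c r y) := by
  by_cases hy : W y = ⊤
  · rw [gibbsWeight_of_eq_top hy, zero_mul]; exact gibbsWeight_nonneg _
  obtain ⟨hr0, hr1⟩ := hr
  have hr1' : 0 ≤ 1 - r := sub_nonneg.2 hr1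
  have hpoint : AffineMap.homothety c r y = r • y + (1 - r) • c := by
    simp only [AffineMap.homothety_apply, vsub_eq_sub, vadd_eq_add]; module
  have hmem : AffineMap.homothety c r y ∈ effectiveDomain W := by
    rw [hpoint]; exact hconv.1 hy hc hr0 hr1' (by ring)
  have henergy : (W (AffineMap.homothety c r y)).toReal ≤
      (W y).toReal - (1 - r ^ 2) * (κ / 2) * ‖y - c‖ ^ 2 := by
    have hsegment := hconv.2 hy hc hr0 hr1' (by ring)
    have hgrowth := mul_le_mul_of_nonneg_left
      (add_sq_norm_sub_le_of_strongConvexOn_of_isMinOn hconv hc hmin hy) hr1'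
    rw [← hpoint] at hsegment
    simp only [smul_eq_mul] at hsegment
    linarith
  set q := (1 - r ^ 2) * (κ / (2 * ε)) * ‖y - c‖ ^ 2 with hq
  rw [gibbsWeight_of_mem_effectiveDomain hy, gibbsWeight_of_mem_effectiveDomain hmem]
  calc Real.exp (-(W y).toReal / ε) * (1 + q)
      ≤ Real.exp (-(W y).toReal / ε) * Real.exp q := by
        gcongr; rw [add_comm]; exact Real.add_one_le_exp q
    _ = Real.exp (-((W y).toReal - (1 - r ^ 2) * (κ / 2) * ‖y - c‖ ^ 2) / ε) := by
        rw [← Real.exp_add, hq]; congr 1; field_simp; ring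
    _ ≤ Real.exp (-(W (AffineMap.homothety c r y)).toReal / ε) := by gcongr

end Pointwise

variable [MeasurableSpace E] [BorelSpace E] (μ : Measure E)

section SecondMoment

variable [NormedSpace ℝ E] [FiniteDimensional ℝ E] [μ.IsAddHaarMeasure]

theorem integrable_gibbsWeight_mul_norm_sub_pow (hW : Measurable W) (hε : 0 < ε) (hκ : 0 < κ)
    (hconv : StrongConvexOn (effectiveDomain W) κ (fun y => (W y).toReal))
    (hc : c ∈ effectiveDomain W) (hmin : IsMinOn (fun y => (W y).toReal) (effectiveDomain W) c)
    (k : ℕ) : Integrable (fun y => gibbsWeight W ε y * ‖y - c‖ ^ k) μ := by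
  have hgaussian := ((integrable_norm_pow_mul_exp_neg_mul_sq_norm μ
    (div_pos hκ (mul_pos two_pos hε)) k).comp_sub_right c).const_mul (Real.exp (-(W c).toReal / ε))
  refine hgaussian.mono'
    ((measurable_gibbsWeight hW).mul (by fun_prop)).aestronglyMeasurable (.of_forall fun y => ?_)
  rw [Real.norm_of_nonneg (mul_nonneg (gibbsWeight_nonneg y) (by positivity))]
  calc gibbsWeight W ε y * ‖y - c‖ ^ k
      ≤ Real.exp (-(W c).toReal / ε) * Real.exp (-(κ / (2 * ε)) * ‖y - c‖ ^ 2) * ‖y - c‖ ^ k := by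
        gcongr; exact gibbsWeight_le_gaussian hε hconv hc hmin y
    _ = _ := by ring

theorem pow_finrank_mul_integral_gibbsWeight_le (hW : Measurable W) (hε : 0 < ε) (hκ : 0 < κ)
    (hconv : StrongConvexOn (effectiveDomain W) κ (fun y => (W y).toReal))
    (hc : c ∈ effectiveDomain W) (hmin : IsMinOn (fun y => (W y).toReal) (effectiveDomain W) c)
    {r : ℝ} (hr0 : 0 < r) (hr1 : r ≤ 1) :
    r ^ finrank ℝ E * (∫ y, gibbsWeight W ε y ∂μ
        + (1 - r ^ 2) * (κ / (2 * ε)) * ∫ y, gibbsWeight W ε y * ‖y - c‖ ^ 2 ∂μ) ≤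
      ∫ y, gibbsWeight W ε y ∂μ := by
  have hmoment := integrable_gibbsWeight_mul_norm_sub_pow μ hW hε hκ hconv hc hmin
  have hi : Integrable (gibbsWeight W ε) μ := by simpa using hmoment 0
  have hadd := hi.add ((hmoment 2).const_mul ((1 - r ^ 2) * (κ / (2 * ε))))
  have hmono : ∫ y, gibbsWeight W ε y
        + (1 - r ^ 2) * (κ / (2 * ε)) * (gibbsWeight W ε y * ‖y - c‖ ^ 2) ∂μ ≤
      ∫ y, gibbsWeight W ε (AffineMap.homothety c r y) ∂μ :=
    integral_mono hadd (integrable_comp_homothety μ hi c hr0.ne') fun y =>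
      (by ring : _ = _).trans_le
        (gibbsWeight_mul_le_comp_homothety hε hconv hc hmin ⟨hr0.le, hr1⟩ y)
  rwa [integral_add hi ((hmoment 2).const_mul _), integral_const_mul, integral_comp_homothety,
    abs_of_pos (by positivity), smul_eq_mul, le_inv_mul_iff₀ (by positivity)] at hmono

theorem integral_gibbsWeight_mul_sq_norm_sub_le (hW : Measurable W) (hε : 0 < ε) (hκ : 0 < κ)
    (hconv : StrongConvexOn (effectiveDomain W) κ (fun y => (W y).toReal))
    (hc : c ∈ effectiveDomain W) (hmin : IsMinOn (fun y => (W y).toReal) (effectiveDomain W) c) :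
    ∫ y, gibbsWeight W ε y * ‖y - c‖ ^ 2 ∂μ ≤
      finrank ℝ E * ε / κ * ∫ y, gibbsWeight W ε y ∂μ := by
  have hslope := two_mul_le_of_forall_pow_mul_add_le fun r hr0 hr1 => by
    simpa only [mul_assoc] using
      pow_finrank_mul_integral_gibbsWeight_le μ hW hε hκ hconv hc hmin hr0 hr1
  set Z := ∫ y, gibbsWeight W ε y ∂μ
  set I := ∫ y, gibbsWeight W ε y * ‖y - c‖ ^ 2 ∂μ
  calc I = ε / κ * (2 * (κ / (2 * ε) * I)) := by field_simp
    _ ≤ ε / κ * (finrank ℝ E * Z) := by gcongr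
    _ = finrank ℝ E * ε / κ * Z := by ring

end SecondMoment

theorem gibbsWeight_variance_le [InnerProductSpace ℝ E] [FiniteDimensional ℝ E]
    [μ.IsAddHaarMeasure] (hlsc : LowerSemicontinuous W) (hbot : ∀ y, W y ≠ ⊥)
    (hint : (interior (effectiveDomain W)).Nonempty) (hε : 0 < ε) (hκ : 0 < κ)
    (hconv : StrongConvexOn (effectiveDomain W) κ (fun y => (W y).toReal)) :
    (∫ y, gibbsWeight W ε y ∂μ)⁻¹ * ∫ y, gibbsWeight W ε y *
        ‖y - (∫ y, gibbsWeight W ε y ∂μ)⁻¹ • ∫ y, gibbsWeight W ε y • y ∂μ‖ ^ 2 ∂μ ≤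
      finrank ℝ E * ε / κ := by
  obtain ⟨c, hc, hmin⟩ := exists_isMinOn_toReal_of_strongConvexOn hlsc hbot
    (hint.mono interior_subset) hκ hconv
  have hmoment :=
    integrable_gibbsWeight_mul_norm_sub_pow μ hlsc.measurable hε hκ hconv hc hmin
  have hi : Integrable (gibbsWeight W ε) μ := by simpa using hmoment 0
  have hfirst : Integrable (fun y => gibbsWeight W ε y • (y - c)) μ := by
    refine (hmoment 1).mono' ((measurable_gibbsWeight hlsc.measurable).aestronglyMeasurable.smul
      (by fun_prop)) (.of_forall fun y => ?_)
    rw [norm_smul, Real.norm_of_nonneg (gibbsWeight_nonneg y), pow_one]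
  have hZ := integral_gibbsWeight_pos μ hint hi
  rw [inv_mul_le_iff₀ hZ, integral_mul_sq_norm_sub_mean hi hfirst (hmoment 2) hZ.ne',
    mul_comm (∫ y, gibbsWeight W ε y ∂μ) (_ / _)]
  exact (sub_le_self _ (by positivity)).trans
    (integral_gibbsWeight_mul_sq_norm_sub_le μ hlsc.measurable hε hκ hconv hc hmin)

end Gibbs

section Posterior

variable {E : Type*} [NormedAddCommGroup E] {J : E → EReal} {x : E} {t : ℝ}

/-- The energy `y ↦ ‖x - y‖² / (2t) + J y` whose Gibbs density at temperature `ε` is the posterior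
density. -/
noncomputable def posteriorEnergy (J : E → EReal) (x : E) (t : ℝ) (y : E) : EReal :=
  ((‖x - y‖ ^ 2 / (2 * t) : ℝ) : EReal) + J y

theorem posteriorEnergy_eq_top_iff {y : E} : posteriorEnergy J x t y = ⊤ ↔ J y = ⊤ :=
  not_iff_not.1 (EReal.add_ne_top_iff_ne_top_right (EReal.coe_ne_bot _) (EReal.coe_ne_top _))

theorem effectiveDomain_posteriorEnergy :
    effectiveDomain (posteriorEnergy J x t) = effectiveDomain J :=
  Set.ext fun _ => posteriorEnergy_eq_top_iff.not

theorem posteriorEnergy_ne_bot (hbot : ∀ y, J y ≠ ⊥) (y : E) : posteriorEnergy J x t y ≠ ⊥ := by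
  simp [posteriorEnergy, EReal.add_eq_bot_iff, hbot y]

theorem toReal_posteriorEnergy (hbot : ∀ y, J y ≠ ⊥) {y : E} (hy : y ∈ effectiveDomain J) :
    (posteriorEnergy J x t y).toReal = ‖x - y‖ ^ 2 / (2 * t) + (J y).toReal :=
  EReal.toReal_add (EReal.coe_ne_top _) (EReal.coe_ne_bot _) hy (hbot y)

theorem lowerSemicontinuous_posteriorEnergy (hJ : LowerSemicontinuous J) :
    LowerSemicontinuous (posteriorEnergy J x t) :=
  (continuous_coe_real_ereal.comp (by fun_prop)).lowerSemicontinuous.add' hJ fun _ =>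
    EReal.continuousAt_add (.inl (EReal.coe_ne_top _)) (.inl (EReal.coe_ne_bot _))

theorem strongConvexOn_posteriorEnergy {E : Type*} [NormedAddCommGroup E] [InnerProductSpace ℝ E]
    {J : E → EReal} {m : ℝ} (hbot : ∀ y, J y ≠ ⊥)
    (hJ : StrongConvexOn (effectiveDomain J) m (fun y => (J y).toReal)) (x : E) (t : ℝ) :
    StrongConvexOn (effectiveDomain (posteriorEnergy J x t)) (t⁻¹ + m)
      (fun y => (posteriorEnergy J x t y).toReal) := by
  rw [effectiveDomain_posteriorEnergy]
  refine ⟨hJ.1, fun y hy z hz a b ha hb hab => ?_⟩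
  have hsum := (UniformConvexOn.add (strongConvexOn_sq_norm_sub hJ.1 t⁻¹ x) hJ).2 hy hz ha hb hab
  have hcoeff : t⁻¹ / 2 = (2 * t)⁻¹ := by ring
  simp only [toReal_posteriorEnergy hbot hy, toReal_posteriorEnergy hbot hz,
    toReal_posteriorEnergy hbot (hJ.1 hy hz ha hb hab), div_eq_inv_mul _ (2 * t), ← hcoeff]
  simp only [Pi.add_apply, smul_eq_mul] at hsum ⊢
  linarith

theorem heatIntegrand_eq_gibbsWeight {n : ℕ} {J : EuclideanSpace ℝ (Fin n) → EReal}
    (hbot : ∀ y, J y ≠ ⊥) (x : EuclideanSpace ℝ (Fin n)) (t ε : ℝ) :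
    heatIntegrand n J x t ε = gibbsWeight (posteriorEnergy J x t) ε := by
  ext y
  by_cases hy : J y = ⊤
  · simp only [heatIntegrand, gibbsWeight, posteriorEnergy_eq_top_iff, if_pos hy]
  · simp only [heatIntegrand, gibbsWeight, posteriorEnergy_eq_top_iff, if_neg hy,
      toReal_posteriorEnergy hbot hy, neg_div]

end Posterior

theorem postVariance_optimal_bound_general (n : ℕ) (J : EuclideanSpace ℝ (Fin n) → EReal)
    (hJ_proper_bot : ∀ y, J y ≠ ⊥)
    (hJ_lsc : LowerSemicontinuous J)
    (hJ_int : (interior {y : EuclideanSpace ℝ (Fin n) | J y ≠ ⊤}).Nonempty)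
    (m : ℝ)
    (hJ_strconv : ∀ y₁ y₂ : EuclideanSpace ℝ (Fin n), ∀ a b : ℝ, 0 ≤ a → 0 ≤ b → a + b = 1 →
      J (a • y₁ + b • y₂)
        ≤ (a : EReal) * J y₁ + (b : EReal) * J y₂
            - (((m / 2 * a * b * ‖y₁ - y₂‖ ^ 2 : ℝ)) : EReal))
    (x : EuclideanSpace ℝ (Fin n)) (t ε : ℝ) (ht : 0 < t) (hε : 0 < ε) (hmt : 0 < 1 + m * t) :
    (partitionFn n J x t ε)⁻¹
        * ∫ y, heatIntegrand n J x t ε y * ‖y - postMean n J x t ε‖ ^ 2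
      ≤ n * t * ε / (1 + m * t) := by
  have hκ_eq : t⁻¹ + m = (1 + m * t) / t := by field_simp
  have hκ : 0 < t⁻¹ + m := hκ_eq ▸ div_pos hmt ht
  have hconv := strongConvexOn_posteriorEnergy hJ_proper_bot
    (strongConvexOn_toReal_of_forall_le hJ_proper_bot hJ_strconv) x t
  have hvariance := gibbsWeight_variance_le volume (lowerSemicontinuous_posteriorEnergy hJ_lsc)
    (posteriorEnergy_ne_bot hJ_proper_bot)
    (by rwa [effectiveDomain_posteriorEnergy]) hε hκ hconv
  simp only [partitionFn, postMean, heatIntegrand_eq_gibbsWeight hJ_proper_bot]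
  calc _ ≤ (finrank ℝ (EuclideanSpace ℝ (Fin n)) : ℝ) * ε / (t⁻¹ + m) := hvariance
    _ = n * t * ε / (1 + m * t) := by rw [finrank_euclideanSpace_fin, hκ_eq]; field_simp

/-- If `J` is strongly convex with parameter `m ≥ 0` (the case `m = 0` being plain
convexity), then for every `x`, `t > 0` and `ε > 0`, the posterior mean squared error
satisfies the optimal bound `E_J[‖y − u_PM(x,t,ε)‖²] ≤ ntε/(1 + mt)`. -/
theorem postVariance_optimal_bound (n : ℕ) (hn : 1 ≤ n)
    (J : EuclideanSpace ℝ (Fin n) → EReal)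
    (hJ_proper_bot : ∀ y, J y ≠ ⊥)
    (hJ_lsc : LowerSemicontinuous J)
    (hJ_int : (interior {y : EuclideanSpace ℝ (Fin n) | J y ≠ ⊤}).Nonempty)
    (hJ_inf : (⨅ y : EuclideanSpace ℝ (Fin n), J y) = (0 : EReal))
    (m : ℝ) (hm : 0 ≤ m)
    (hJ_strconv : ∀ y₁ y₂ : EuclideanSpace ℝ (Fin n), ∀ a b : ℝ, 0 ≤ a → 0 ≤ b → a + b = 1 →
      J (a • y₁ + b • y₂)
        ≤ (a : EReal) * J y₁ + (b : EReal) * J y₂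
            - (((m / 2 * a * b * ‖y₁ - y₂‖ ^ 2 : ℝ)) : EReal))
    (x : EuclideanSpace ℝ (Fin n)) (t ε : ℝ) (ht : 0 < t) (hε : 0 < ε) :
    (partitionFn n J x t ε)⁻¹
        * ∫ y, heatIntegrand n J x t ε y * ‖y - postMean n J x t ε‖ ^ 2
      ≤ n * t * ε / (1 + m * t) :=
  postVariance_optimal_bound_general n J hJ_proper_bot hJ_lsc hJ_int m hJ_strconv x t ε ht hε
    (by positivity)
end

section
/- Suppose in addition that J is strongly convex with parameter m ≥ 0 (the case m = 0 being plain convexity). Then for every x ∈ ℝⁿ, t > 0 and ε > 0, the MAP and posterior mean estimates satisfy ‖u_MAP(x,t) − u_PM(x,t,ε)‖² ≤ ntε/(1 + mt), where u_MAP(x,t) is the unique minimizer of y ↦ ‖x−y‖²/(2t) + J(y) over ℝⁿ. -/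
open scoped Topology
open Filter MeasureTheory

/-!
Let `f` be strongly convex with parameter `κ > 0` on a convex domain `s` and minimal at `u`, and
let `Z`, `M` be the integrals over `s` of `exp (-f y)` and `‖y - u‖² exp (-f y)`. Quadratic growth
at `u`, added to strong convexity along the segment from `u` to `y`, gives
`f (u + r (y - u)) + (1 - r²) κ / 2 ‖y - u‖² ≤ f y` for `r ∈ [0, 1]`. Exponentiating, and
integrating after the dilation `y ↦ u + r (y - u)`, one gets `r ^ d (Z + (1 - r²) κ / 2 M) ≤ Z` in
dimension `d`, with equality at `r = 1`. The derivative of the left side at `r = 1` is therefore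
nonnegative, that is, `κ M ≤ d Z`, and by Jensen's inequality the mean of the density
proportional to `exp (-f)` lies within distance `√(d / κ)` of `u`. For the posterior,
`κ = (1 / t + m) / ε`.
-/

section StrongConvexity

variable {E : Type*} [NormedAddCommGroup E]

section NormedSpace

variable [NormedSpace ℝ E] {s : Set E} {κ : ℝ} {f : E → ℝ} {u : E}

lemma strongConvexOn_const_mul {c : ℝ} (hc : 0 ≤ c) (hf : StrongConvexOn s κ f) :
    StrongConvexOn s (c * κ) fun y ↦ c * f y := by
  refine ⟨hf.1, fun y hy z hz a b ha hb hab ↦ ?_⟩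
  have hle := mul_le_mul_of_nonneg_left (hf.2 hy hz ha hb hab) hc
  simp only [smul_eq_mul] at hle ⊢
  linarith

lemma add_norm_sub_sq_le_of_isMinOn (hf : StrongConvexOn s κ f) (hu : u ∈ s)
    (hmin : IsMinOn f s u) {y : E} (hy : y ∈ s) : f u + κ / 2 * ‖y - u‖ ^ 2 ≤ f y := by
  have hchord : ∀ r ∈ Set.Ioo (0 : ℝ) 1, f u + (1 - r) * (κ / 2 * ‖y - u‖ ^ 2) ≤ f y := by
    rintro r ⟨hr₀, hr₁⟩
    have hconv := hf.2 hy hu hr₀.le (sub_nonneg.2 hr₁.le) (add_sub_cancel r 1)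
    have hge := hmin (hf.1 hy hu hr₀.le (sub_nonneg.2 hr₁.le) (add_sub_cancel r 1))
    simp only [smul_eq_mul, Set.mem_ofPred_eq] at hconv hge
    refine le_of_mul_le_mul_left ?_ hr₀
    linarith
  have hlim : Tendsto (fun r : ℝ ↦ f u + (1 - r) * (κ / 2 * ‖y - u‖ ^ 2)) (𝓝[>] 0)
      (𝓝 (f u + (1 - 0) * (κ / 2 * ‖y - u‖ ^ 2))) :=
    ((by fun_prop : Continuous fun r : ℝ ↦ f u + (1 - r) * (κ / 2 * ‖y - u‖ ^ 2)).tendsto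
      0).mono_left nhdsWithin_le_nhds
  simpa using le_of_tendsto hlim
    (eventually_of_mem (Ioo_mem_nhdsGT zero_lt_one) hchord)

lemma add_norm_sub_sq_le_of_isMinOn_segment (hf : StrongConvexOn s κ f) (hu : u ∈ s)
    (hmin : IsMinOn f s u) {y : E} (hy : y ∈ s) {r : ℝ} (hr : r ∈ Set.Icc (0 : ℝ) 1) :
    f (u + r • (y - u)) + (1 - r ^ 2) * (κ / 2 * ‖y - u‖ ^ 2) ≤ f y := by
  have hconv := hf.2 hy hu hr.1 (sub_nonneg.2 hr.2) (add_sub_cancel r 1)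
  have hgrowth := mul_le_mul_of_nonneg_left (add_norm_sub_sq_le_of_isMinOn hf hu hmin hy)
    (sub_nonneg.2 hr.2)
  rw [show r • y + (1 - r) • u = u + r • (y - u) by module] at hconv
  simp only [smul_eq_mul] at hconv
  -- The two gains add up because `r * (1 - r) + (1 - r) = 1 - r ^ 2`.
  linarith

lemma exp_neg_le_gaussian_of_isMinOn (hf : StrongConvexOn s κ f) (hu : u ∈ s)
    (hmin : IsMinOn f s u) {y : E} (hy : y ∈ s) :
    Real.exp (-f y) ≤ Real.exp (-f u) * Real.exp (-(κ / 2) * ‖y - u‖ ^ 2) := by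
  rw [← Real.exp_add, Real.exp_le_exp]
  linarith [add_norm_sub_sq_le_of_isMinOn hf hu hmin hy]

lemma one_add_mul_indicator_exp_neg_le (hf : StrongConvexOn s κ f) (hu : u ∈ s)
    (hmin : IsMinOn f s u) {r : ℝ} (hr : r ∈ Set.Icc (0 : ℝ) 1) (y : E) :
    (1 + (1 - r ^ 2) * (κ / 2 * ‖y - u‖ ^ 2)) * s.indicator (fun z ↦ Real.exp (-f z)) y ≤
      s.indicator (fun z ↦ Real.exp (-f z)) (u + r • (y - u)) := by
  by_cases hy : y ∈ s
  · rw [Set.indicator_of_mem hy, Set.indicator_of_mem (hf.1.add_smul_sub_mem hu hy hr)]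
    calc (1 + (1 - r ^ 2) * (κ / 2 * ‖y - u‖ ^ 2)) * Real.exp (-f y)
        ≤ Real.exp ((1 - r ^ 2) * (κ / 2 * ‖y - u‖ ^ 2)) * Real.exp (-f y) := by
          gcongr
          rw [add_comm]
          exact Real.add_one_le_exp _
      _ ≤ Real.exp (-f (u + r • (y - u))) := by
          rw [← Real.exp_add, Real.exp_le_exp]
          linarith [add_norm_sub_sq_le_of_isMinOn_segment hf hu hmin hy hr]
  · rw [Set.indicator_of_notMem hy, mul_zero]
    exact Set.indicator_nonneg (fun _ _ ↦ (Real.exp_pos _).le) _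

lemma le_of_strongConvexOn_of_far {x₀ : E} {C : ℝ} (hκ : 0 < κ) (hf : StrongConvexOn s κ f)
    (hx₀ : x₀ ∈ s) (hC : ∀ z ∈ s, ‖z - x₀‖ ≤ 1 → C ≤ f z) {y : E} (hy : y ∈ s)
    (hfar : 1 + 2 * (f x₀ - C) / κ ≤ ‖y - x₀‖) : f x₀ ≤ f y := by
  have hC₀ : C ≤ f x₀ := hC x₀ hx₀ (by simp)
  set r := ‖y - x₀‖
  -- Use convexity at the point of the segment from `x₀` to `y` at distance `1` from `x₀`.
  have hr : 1 ≤ r := hfar.trans' (le_add_of_nonneg_right (by have := sub_nonneg.2 hC₀; positivity))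
  have hr₀ : 0 < r := one_pos.trans_le hr
  have hinv : r⁻¹ ≤ 1 := inv_le_one_of_one_le₀ hr
  have hmem := hf.1 hy hx₀ (inv_nonneg.2 hr₀.le) (sub_nonneg.2 hinv) (add_sub_cancel r⁻¹ 1)
  have hnear : ‖r⁻¹ • y + (1 - r⁻¹) • x₀ - x₀‖ ≤ 1 := by
    rw [show r⁻¹ • y + (1 - r⁻¹) • x₀ - x₀ = r⁻¹ • (y - x₀) by module, norm_smul,
      Real.norm_of_nonneg (inv_nonneg.2 hr₀.le), inv_mul_cancel₀ hr₀.ne']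
  have hchord : C ≤ r⁻¹ * f y + (1 - r⁻¹) * f x₀ - r⁻¹ * (1 - r⁻¹) * (κ / 2 * r ^ 2) :=
    (hC _ hmem hnear).trans
      (hf.2 hy hx₀ (inv_nonneg.2 hr₀.le) (sub_nonneg.2 hinv) (add_sub_cancel r⁻¹ 1))
  have hscaled : r * C ≤ f y + (r - 1) * f x₀ - (r - 1) * (κ / 2 * r) :=
    calc r * C ≤ r * (r⁻¹ * f y + (1 - r⁻¹) * f x₀ - r⁻¹ * (1 - r⁻¹) * (κ / 2 * r ^ 2)) := by
          gcongr
      _ = f y + (r - 1) * f x₀ - (r - 1) * (κ / 2 * r) := by field_simp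
  have hgap : 0 ≤ (r - 1) * (κ / 2) - (f x₀ - C) := by
    have : 2 * (f x₀ - C) / κ ≤ r - 1 := by linarith
    rw [div_le_iff₀ hκ] at this
    linarith
  linarith [mul_nonneg hr₀.le hgap]

end NormedSpace

lemma strongConvexOn_norm_sub_sq [InnerProductSpace ℝ E] (c : ℝ) (x : E) :
    StrongConvexOn Set.univ c fun y ↦ c / 2 * ‖x - y‖ ^ 2 := by
  have haffine : (fun y ↦ c / 2 * ‖x - y‖ ^ 2 - c / 2 * ‖y‖ ^ 2) =
      fun y ↦ (-c • innerₗ E x) y + c / 2 * ‖x‖ ^ 2 := by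
    ext y
    rw [norm_sub_sq_real]
    simp only [LinearMap.smul_apply, innerₗ_apply_apply, smul_eq_mul]
    ring
  rw [strongConvexOn_iff_convex, haffine]
  exact ((-c • innerₗ E x).convexOn convex_univ).add_const _

end StrongConvexity

section Integration

lemma norm_integral_sq_le {Ω F : Type*} [MeasurableSpace Ω] [NormedAddCommGroup F]
    [NormedSpace ℝ F] [CompleteSpace F] {ν : Measure Ω} [IsProbabilityMeasure ν] {g : Ω → F}
    (hg : MemLp g 2 ν) : ‖∫ ω, g ω ∂ν‖ ^ 2 ≤ ∫ ω, ‖g ω‖ ^ 2 ∂ν :=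
  (convexOn_univ_norm.pow (fun _ _ ↦ norm_nonneg _) 2).map_integral_le
    (by fun_prop) isClosed_univ (by simp) (hg.integrable one_le_two) hg.norm.integrable_sq

variable {E : Type*} [NormedAddCommGroup E] [MeasurableSpace E] [BorelSpace E]

section Haar

variable [NormedSpace ℝ E] [FiniteDimensional ℝ E] {μ : Measure E} [μ.IsAddHaarMeasure]

lemma integral_comp_add_smul_sub {F : Type*} [NormedAddCommGroup F] [NormedSpace ℝ F]
    (g : E → F) (u : E) {r : ℝ} (hr : 0 ≤ r) :
    ∫ y, g (u + r • (y - u)) ∂μ = (r ^ Module.finrank ℝ E)⁻¹ • ∫ y, g y ∂μ := by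
  rw [integral_sub_right_eq_self (fun y ↦ g (u + r • y)) u,
    Measure.integral_comp_smul_of_nonneg μ (fun y ↦ g (u + y)) r (hR := hr),
    integral_add_left_eq_self]

lemma two_mul_integral_norm_sub_sq_mul_le {w : E → ℝ} {u : E} {c : ℝ} (hw : Integrable w μ)
    (hw₂ : Integrable (fun y ↦ ‖y - u‖ ^ 2 * w y) μ)
    (hray : ∀ r ∈ Set.Ioo (0 : ℝ) 1, ∀ y,
      (1 + (1 - r ^ 2) * (c * ‖y - u‖ ^ 2)) * w y ≤ w (u + r • (y - u))) :
    2 * c * ∫ y, ‖y - u‖ ^ 2 * w y ∂μ ≤ Module.finrank ℝ E * ∫ y, w y ∂μ := by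
  set d := Module.finrank ℝ E
  set Z := ∫ y, w y ∂μ
  set M := ∫ y, ‖y - u‖ ^ 2 * w y ∂μ
  set φ : ℝ → ℝ := fun r ↦ r ^ d * (Z + (1 - r ^ 2) * (c * M)) with hφ
  -- `φ` is largest at the right endpoint of `(0, 1]`, so its derivative there is nonnegative.
  have hφ_le : ∀ r ∈ Set.Ioo (0 : ℝ) 1, φ r ≤ φ 1 := by
    rintro r ⟨hr₀, hr₁⟩
    have hsplit : (fun y ↦ (1 + (1 - r ^ 2) * (c * ‖y - u‖ ^ 2)) * w y) =
        fun y ↦ w y + (1 - r ^ 2) * c * (‖y - u‖ ^ 2 * w y) := by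
      ext y; ring
    have hmono : Z + (1 - r ^ 2) * c * M ≤ (r ^ d)⁻¹ * Z := by
      calc Z + (1 - r ^ 2) * c * M
          = ∫ y, (1 + (1 - r ^ 2) * (c * ‖y - u‖ ^ 2)) * w y ∂μ := by
            rw [hsplit, integral_add hw (hw₂.const_mul _), integral_const_mul]
        _ ≤ ∫ y, w (u + r • (y - u)) ∂μ := by
            refine integral_mono ?_ (((hw.comp_add_left u).comp_smul hr₀.ne').comp_sub_right u)
              (hray r ⟨hr₀, hr₁⟩)
            rw [hsplit]
            exact hw.add (hw₂.const_mul _)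
        _ = (r ^ d)⁻¹ * Z := integral_comp_add_smul_sub w u hr₀.le
    rw [le_inv_mul_iff₀ (by positivity)] at hmono
    simpa [hφ, mul_assoc] using hmono
  have hφ_deriv : HasDerivAt φ (d * Z - 2 * c * M) 1 :=
    ((hasDerivAt_pow d (1 : ℝ)).mul
      ((((hasDerivAt_pow 2 (1 : ℝ)).const_sub 1).mul_const (c * M)).const_add Z)).congr_deriv
      (by simp only [one_pow]; push_cast; ring)
  have hslope : ∀ᶠ r in 𝓝[<] (1 : ℝ), 0 ≤ slope φ 1 r := by
    filter_upwards [Ioo_mem_nhdsLT zero_lt_one] with r hr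
    rw [slope_comm, slope_nonneg_iff_of_le hr.2.le]
    exact hφ_le r hr
  have hnonneg : 0 ≤ d * Z - 2 * c * M := ge_of_tendsto
    ((hasDerivAt_iff_tendsto_slope.1 hφ_deriv).mono_left
      (nhdsWithin_mono (s := Set.Iio 1) 1 fun _ hr ↦ ne_of_lt hr)) hslope
  linarith

lemma aemeasurable_restrict_of_convexOn {s : Set E} {f : E → ℝ} (hf : ConvexOn ℝ s f) :
    AEMeasurable f (μ.restrict s) := by
  rw [← Measure.restrict_congr_set
    (interior_ae_eq_of_null_frontier (hf.1.addHaar_frontier μ))]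
  exact hf.continuousOn_interior.aemeasurable isOpen_interior.measurableSet

end Haar

section Gaussian

variable [InnerProductSpace ℝ E] [FiniteDimensional ℝ E] {b : ℝ}

lemma integrable_exp_neg_mul_norm_sq (hb : 0 < b) :
    Integrable fun y : E ↦ Real.exp (-b * ‖y‖ ^ 2) := by
  simpa [Complex.norm_exp, ← Complex.ofReal_pow] using
    (GaussianFourier.integrable_cexp_neg_mul_sq_norm_add (b := (b : ℂ)) (by simpa using hb)
      0 (0 : E)).norm

lemma integrable_norm_sq_mul_exp_neg_mul_norm_sq (hb : 0 < b) :
    Integrable fun y : E ↦ ‖y‖ ^ 2 * Real.exp (-b * ‖y‖ ^ 2) := by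
  have hsub : Set.Iio 0 ⊆ ProbabilityTheory.integrableExpSet (fun y : E ↦ ‖y‖ ^ 2) volume :=
    fun a ha ↦ by
      simpa [ProbabilityTheory.integrableExpSet] using
        integrable_exp_neg_mul_norm_sq (E := E) (neg_pos.2 ha)
  simpa using ProbabilityTheory.integrable_pow_mul_exp_of_mem_interior_integrableExpSet
    (interior_maximal hsub isOpen_Iio (neg_neg_of_pos hb)) 1

end Gaussian

section LogConcave

variable [InnerProductSpace ℝ E] [FiniteDimensional ℝ E] {s : Set E} {κ : ℝ} {f : E → ℝ} {u : E}

lemma integrableOn_exp_neg_of_strongConvexOn (hκ : 0 < κ) (hf : StrongConvexOn s κ f) (hu : u ∈ s)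
    (hmin : IsMinOn f s u) : IntegrableOn (fun y ↦ Real.exp (-f y)) s := by
  have hmeas := aemeasurable_restrict_of_convexOn (μ := volume) (hf.strictConvexOn hκ).convexOn
  refine ((((integrable_exp_neg_mul_norm_sq (half_pos hκ)).comp_sub_right u).const_mul
    (Real.exp (-f u))).integrableOn (s := s)).mono' hmeas.neg.exp.aestronglyMeasurable ?_
  filter_upwards [ae_restrict_mem₀ (hf.1.nullMeasurableSet volume)] with y hy
  rw [Real.norm_of_nonneg (Real.exp_pos _).le]
  exact exp_neg_le_gaussian_of_isMinOn hf hu hmin hy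

lemma integrableOn_norm_sub_sq_mul_exp_neg_of_strongConvexOn (hκ : 0 < κ)
    (hf : StrongConvexOn s κ f) (hu : u ∈ s) (hmin : IsMinOn f s u) :
    IntegrableOn (fun y ↦ ‖y - u‖ ^ 2 * Real.exp (-f y)) s := by
  have hmeas := aemeasurable_restrict_of_convexOn (μ := volume) (hf.strictConvexOn hκ).convexOn
  refine ((((integrable_norm_sq_mul_exp_neg_mul_norm_sq (half_pos hκ)).comp_sub_right u).const_mul
    (Real.exp (-f u))).integrableOn (s := s)).mono'
    (AEMeasurable.aestronglyMeasurable (by fun_prop)) ?_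
  filter_upwards [ae_restrict_mem₀ (hf.1.nullMeasurableSet volume)] with y hy
  rw [Real.norm_of_nonneg (by positivity), mul_left_comm]
  gcongr
  exact exp_neg_le_gaussian_of_isMinOn hf hu hmin hy

lemma mul_setIntegral_norm_sub_sq_mul_exp_neg_le (hκ : 0 < κ) (hf : StrongConvexOn s κ f)
    (hu : u ∈ s) (hmin : IsMinOn f s u) :
    κ * ∫ y in s, ‖y - u‖ ^ 2 * Real.exp (-f y) ≤
      Module.finrank ℝ E * ∫ y in s, Real.exp (-f y) := by
  have hs : NullMeasurableSet s := hf.1.nullMeasurableSet volume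
  have hint := (integrableOn_exp_neg_of_strongConvexOn hκ hf hu hmin).integrable_indicator₀ hs
  have hint₂ : Integrable fun y ↦ ‖y - u‖ ^ 2 * s.indicator (fun z ↦ Real.exp (-f z)) y :=
    ((integrableOn_norm_sub_sq_mul_exp_neg_of_strongConvexOn hκ hf hu
      hmin).integrable_indicator₀ hs).congr (ae_of_all _ fun _ ↦ Set.indicator_mul_right s _ _)
  rw [← integral_indicator₀ hs, ← integral_indicator₀ hs]
  simp only [Set.indicator_mul_right]
  have hmoment := two_mul_integral_norm_sub_sq_mul_le hint hint₂ fun r hr ↦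
    one_add_mul_indicator_exp_neg_le hf hu hmin (Set.Ioo_subset_Icc_self hr)
  rwa [mul_div_cancel₀ κ two_ne_zero] at hmoment

theorem norm_sub_integral_tilted_neg_sq_le (hκ : 0 < κ) (hf : StrongConvexOn s κ f) (hu : u ∈ s)
    (hmin : IsMinOn f s u) (hs : (interior s).Nonempty) :
    ‖u - ∫ y, y ∂(volume.restrict s).tilted (fun y ↦ -f y)‖ ^ 2 ≤ Module.finrank ℝ E / κ := by
  have : NeZero (volume.restrict s) := ⟨by
    rw [Ne, Measure.restrict_eq_zero]
    exact (Measure.measure_pos_of_nonempty_interior volume hs).ne'⟩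
  have hint := integrableOn_exp_neg_of_strongConvexOn hκ hf hu hmin
  have hint₂ := integrableOn_norm_sub_sq_mul_exp_neg_of_strongConvexOn hκ hf hu hmin
  set ν := (volume.restrict s).tilted fun y ↦ -f y
  have : IsProbabilityMeasure ν := isProbabilityMeasure_tilted hint
  have hν₂ : Integrable (fun y ↦ ‖y - u‖ ^ 2) ν := by
    rw [integrable_tilted_iff hint]
    simpa only [smul_eq_mul, mul_comm] using! hint₂
  have hν : MemLp (fun y ↦ y - u) 2 ν :=
    (memLp_two_iff_integrable_sq_norm (by fun_prop)).2 hν₂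
  have hmoment : ∫ y, ‖y - u‖ ^ 2 ∂ν ≤ Module.finrank ℝ E / κ := by
    rw [integral_tilted]
    have hpos := integral_exp_pos hint
    have hle := mul_setIntegral_norm_sub_sq_mul_exp_neg_le hκ hf hu hmin
    simp only [smul_eq_mul, div_mul_eq_mul_div, mul_comm (Real.exp _), integral_div]
    rw [div_le_div_iff₀ hpos hκ]
    linarith
  have hmean : ∫ y, y - u ∂ν = ∫ y, y ∂ν - u := by
    have hid : Integrable (fun y : E ↦ y) ν :=
      ((hν.integrable one_le_two).add (integrable_const u)).congr
        (ae_of_all _ fun y ↦ sub_add_cancel y u)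
    rw [integral_sub hid (integrable_const u), integral_const, probReal_univ, one_smul]
  rw [norm_sub_rev, ← hmean]
  exact (norm_integral_sq_le hν).trans hmoment

end LogConcave

end Integration

section ExtendedReal

lemma isMinOn_toReal {X : Type*} {φ : X → EReal} {u : X} (hbot : φ u ≠ ⊥)
    (hmin : IsMinOn φ Set.univ u) : IsMinOn (fun y ↦ (φ y).toReal) {y | φ y ≠ ⊤} u :=
  fun y hy ↦ EReal.toReal_le_toReal (hmin (Set.mem_univ y)) hbot hy

lemma ne_top_of_isMinOn {X : Type*} {φ : X → EReal} {u y : X} (hmin : IsMinOn φ Set.univ u)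
    (hy : φ y ≠ ⊤) : φ u ≠ ⊤ :=
  ne_top_of_le_ne_top hy (hmin (Set.mem_univ y))

variable {E : Type*} [NormedAddCommGroup E] [NormedSpace ℝ E] {φ : E → EReal}

lemma strongConvexOn_toReal {m : ℝ} (hbot : ∀ y, φ y ≠ ⊥)
    (hφ : ∀ y z : E, ∀ a b : ℝ, 0 ≤ a → 0 ≤ b → a + b = 1 →
      φ (a • y + b • z) ≤
        (a : EReal) * φ y + (b : EReal) * φ z - ((m / 2 * a * b * ‖y - z‖ ^ 2 : ℝ) : EReal)) :
    StrongConvexOn {y | φ y ≠ ⊤} m fun y ↦ (φ y).toReal := by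
  have hreal : ∀ y, φ y ≠ ⊤ → ∀ z, φ z ≠ ⊤ → ∀ a b : ℝ, 0 ≤ a → 0 ≤ b → a + b = 1 →
      φ (a • y + b • z) ≤ ((a * (φ y).toReal + b * (φ z).toReal
        - a * b * (m / 2 * ‖y - z‖ ^ 2) : ℝ) : EReal) := by
    intro y hy z hz a b ha hb hab
    have hle := hφ y z a b ha hb hab
    rw [← EReal.coe_toReal hy (hbot y), ← EReal.coe_toReal hz (hbot z)] at hle
    norm_cast at hle
    convert hle using 2
    ring
  have hdom : Convex ℝ {y | φ y ≠ ⊤} := fun y hy z hz a b ha hb hab ↦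
    ((hreal y hy z hz a b ha hb hab).trans_lt (EReal.coe_lt_top _)).ne
  refine ⟨hdom, fun y hy z hz a b ha hb hab ↦ ?_⟩
  exact EReal.toReal_le_toReal (hreal y hy z hz a b ha hb hab) (hbot _) (EReal.coe_ne_top _)

lemma exists_isMinOn_of_strongConvexOn_toReal [ProperSpace E] {κ : ℝ} (hκ : 0 < κ)
    (hbot : ∀ y, φ y ≠ ⊥) (hlsc : LowerSemicontinuous φ)
    (hφ : StrongConvexOn {y | φ y ≠ ⊤} κ fun y ↦ (φ y).toReal) {x₀ : E} (hx₀ : φ x₀ ≠ ⊤) :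
    ∃ u, IsMinOn φ Set.univ u := by
  have hball : ∀ R : ℝ, 0 ≤ R → ∃ z ∈ Metric.closedBall x₀ R,
      IsMinOn φ (Metric.closedBall x₀ R) z := fun R hR ↦
    (hlsc.lowerSemicontinuousOn _).exists_isMinOn ⟨x₀, Metric.mem_closedBall_self hR⟩
      (isCompact_closedBall x₀ R)
  obtain ⟨z, -, hz⟩ := hball 1 zero_le_one
  have hlower : ∀ y ∈ {y | φ y ≠ ⊤}, ‖y - x₀‖ ≤ 1 → (φ z).toReal ≤ (φ y).toReal :=
    fun y hy hyx ↦ EReal.toReal_le_toReal (hz (mem_closedBall_iff_norm.2 hyx)) (hbot z) hy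
  set R := 1 + 2 * ((φ x₀).toReal - (φ z).toReal) / κ
  have hR : 0 ≤ R := by
    have := sub_nonneg.2 (hlower x₀ hx₀ (by simp))
    positivity
  obtain ⟨u, -, hu⟩ := hball R hR
  refine ⟨u, fun y _ ↦ ?_⟩
  by_cases hy : ‖y - x₀‖ ≤ R
  · exact hu (mem_closedBall_iff_norm.2 hy)
  refine (show φ u ≤ φ x₀ from hu (Metric.mem_closedBall_self hR)).trans ?_
  obtain htop | hy_dom := eq_or_ne (φ y) ⊤
  · exact htop ▸ le_top
  · have hfar := le_of_strongConvexOn_of_far hκ hφ hx₀ hlower hy_dom (not_le.1 hy).le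
    rwa [← EReal.coe_le_coe_iff, EReal.coe_toReal hx₀ (hbot _),
      EReal.coe_toReal hy_dom (hbot _)] at hfar

end ExtendedReal

section MapObjective

variable {E : Type*} [NormedAddCommGroup E]

/-- The functional `y ↦ ‖x - y‖² / (2t) + J y`, whose minimizer is the MAP estimate
`u_MAP(x, t)`. -/
noncomputable def mapObjective (x : E) (t : ℝ) (J : E → EReal) (y : E) : EReal :=
  ((‖x - y‖ ^ 2 / (2 * t) : ℝ) : EReal) + J y

variable {J : E → EReal} {x : E} {t : ℝ}

lemma mapObjective_ne_bot (hbot : ∀ y, J y ≠ ⊥) (y : E) : mapObjective x t J y ≠ ⊥ := by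
  simp [mapObjective, EReal.add_eq_bot_iff, hbot]

lemma mapObjective_ne_top_iff (y : E) : mapObjective x t J y ≠ ⊤ ↔ J y ≠ ⊤ :=
  EReal.add_ne_top_iff_ne_top_right (EReal.coe_ne_bot _) (EReal.coe_ne_top _)

lemma toReal_mapObjective {y : E} (hbot : J y ≠ ⊥) (htop : J y ≠ ⊤) :
    (mapObjective x t J y).toReal = ‖x - y‖ ^ 2 / (2 * t) + (J y).toReal :=
  EReal.toReal_add (EReal.coe_ne_top _) (EReal.coe_ne_bot _) htop hbot

lemma lowerSemicontinuous_mapObjective (hJ : LowerSemicontinuous J) :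
    LowerSemicontinuous (mapObjective x t J) :=
  (continuous_coe_real_ereal.comp (by fun_prop)).lowerSemicontinuous.add' hJ fun _ ↦
    EReal.continuousAt_add (Or.inl (EReal.coe_ne_top _)) (Or.inl (EReal.coe_ne_bot _))

lemma strongConvexOn_toReal_mapObjective [InnerProductSpace ℝ E] {m : ℝ} (hbot : ∀ y, J y ≠ ⊥)
    (hJ : StrongConvexOn {y | J y ≠ ⊤} m fun y ↦ (J y).toReal) :
    StrongConvexOn {y | mapObjective x t J y ≠ ⊤} (t⁻¹ + m)
      fun y ↦ (mapObjective x t J y).toReal := by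
  simp only [mapObjective_ne_top_iff]
  have hquad := (strongConvexOn_norm_sub_sq t⁻¹ x).2
  refine ⟨hJ.1, fun y hy z hz a b ha hb hab ↦ ?_⟩
  have hsum := add_le_add (hquad (Set.mem_univ y) (Set.mem_univ z) ha hb hab)
    (hJ.2 hy hz ha hb hab)
  beta_reduce
  rw [toReal_mapObjective (hbot _) (hJ.1 hy hz ha hb hab), toReal_mapObjective (hbot y) hy,
    toReal_mapObjective (hbot z) hz]
  simp only [smul_eq_mul] at hsum ⊢
  have hscale : ∀ z, ‖x - z‖ ^ 2 / (2 * t) = t⁻¹ / 2 * ‖x - z‖ ^ 2 := fun z ↦ by ring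
  simp only [hscale]
  linarith

end MapObjective

lemma heatIntegrand_eq_indicator {n : ℕ} {J : EuclideanSpace ℝ (Fin n) → EReal}
    (hbot : ∀ y, J y ≠ ⊥) (x : EuclideanSpace ℝ (Fin n)) (t ε : ℝ) :
    heatIntegrand n J x t ε = {y | mapObjective x t J y ≠ ⊤}.indicator
      fun y ↦ Real.exp (-(ε⁻¹ * (mapObjective x t J y).toReal)) := by
  ext y
  simp only [mapObjective_ne_top_iff]
  by_cases hy : J y = ⊤
  · simp [heatIntegrand, hy]
  · simp [heatIntegrand, hy, toReal_mapObjective (hbot y) hy, div_eq_inv_mul]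

lemma postMean_eq_integral_tilted {n : ℕ} {J : EuclideanSpace ℝ (Fin n) → EReal}
    (hbot : ∀ y, J y ≠ ⊥) (x : EuclideanSpace ℝ (Fin n)) (t ε : ℝ)
    (hdom : NullMeasurableSet {y | mapObjective x t J y ≠ ⊤}) :
    postMean n J x t ε = ∫ y, y ∂(volume.restrict {y | mapObjective x t J y ≠ ⊤}).tilted
      fun y ↦ -(ε⁻¹ * (mapObjective x t J y).toReal) := by
  rw [postMean, partitionFn, heatIntegrand_eq_indicator hbot, integral_indicator₀ hdom,
    integral_tilted]
  simp only [← Set.indicator_smul_left]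
  rw [integral_indicator₀ hdom, ← integral_smul]
  simp only [smul_smul, div_eq_inv_mul]

theorem map_postMean_distance_bound_general (n : ℕ)
    (J : EuclideanSpace ℝ (Fin n) → EReal)
    (hJ_proper_bot : ∀ y, J y ≠ ⊥)
    (hJ_lsc : LowerSemicontinuous J)
    (hJ_int : (interior {y : EuclideanSpace ℝ (Fin n) | J y ≠ ⊤}).Nonempty)
    (m : ℝ)
    (hJ_strconv : ∀ y₁ y₂ : EuclideanSpace ℝ (Fin n), ∀ a b : ℝ, 0 ≤ a → 0 ≤ b → a + b = 1 →
      J (a • y₁ + b • y₂)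
        ≤ (a : EReal) * J y₁ + (b : EReal) * J y₂
            - (((m / 2 * a * b * ‖y₁ - y₂‖ ^ 2 : ℝ)) : EReal))
    (x : EuclideanSpace ℝ (Fin n)) (t ε : ℝ) (ht : 0 < t) (hmt : 0 < 1 + m * t) (hε : 0 < ε) :
    ∃ uMAP : EuclideanSpace ℝ (Fin n),
      (∀ y : EuclideanSpace ℝ (Fin n),
        (((‖x - uMAP‖ ^ 2 / (2 * t) : ℝ)) : EReal) + J uMAP
          ≤ (((‖x - y‖ ^ 2 / (2 * t) : ℝ)) : EReal) + J y) ∧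
      (∀ u' : EuclideanSpace ℝ (Fin n),
        (∀ y : EuclideanSpace ℝ (Fin n),
          (((‖x - u'‖ ^ 2 / (2 * t) : ℝ)) : EReal) + J u'
            ≤ (((‖x - y‖ ^ 2 / (2 * t) : ℝ)) : EReal) + J y) → u' = uMAP) ∧
      ‖uMAP - postMean n J x t ε‖ ^ 2 ≤ n * t * ε / (1 + m * t) := by
  have hbot := mapObjective_ne_bot (x := x) (t := t) hJ_proper_bot
  have hκ : 0 < t⁻¹ + m := by
    rw [show t⁻¹ + m = (1 + m * t) / t by field_simp]
    positivity
  have hconv := strongConvexOn_toReal_mapObjective (x := x) (t := t) hJ_proper_bot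
    (strongConvexOn_toReal hJ_proper_bot hJ_strconv)
  have hint : (interior {y | mapObjective x t J y ≠ ⊤}).Nonempty := by
    simpa only [mapObjective_ne_top_iff] using hJ_int
  obtain ⟨y₀, hy₀⟩ : {y | mapObjective x t J y ≠ ⊤}.Nonempty := hint.mono interior_subset
  obtain ⟨u, hu⟩ := exists_isMinOn_of_strongConvexOn_toReal hκ hbot
    (lowerSemicontinuous_mapObjective hJ_lsc) hconv hy₀
  refine ⟨u, fun y ↦ hu (Set.mem_univ y), fun v hv ↦ ?_, ?_⟩
  · have hv : IsMinOn (mapObjective x t J) Set.univ v := fun y _ ↦ hv y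
    exact (hconv.strictConvexOn hκ).eq_of_isMinOn (isMinOn_toReal (hbot _) hv)
      (isMinOn_toReal (hbot _) hu) (ne_top_of_isMinOn hv hy₀) (ne_top_of_isMinOn hu hy₀)
  · rw [postMean_eq_integral_tilted hJ_proper_bot x t ε (hconv.1.nullMeasurableSet volume)]
    refine (norm_sub_integral_tilted_neg_sq_le (mul_pos (inv_pos.2 hε) hκ)
      (strongConvexOn_const_mul (inv_nonneg.2 hε.le) hconv) (ne_top_of_isMinOn hu hy₀)
      (fun y hy ↦ mul_le_mul_of_nonneg_left (isMinOn_toReal (hbot _) hu hy) (inv_nonneg.2 hε.le))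
      hint).trans_eq ?_
    rw [finrank_euclideanSpace_fin]
    field_simp

/-- If `J` is strongly convex with parameter `m ≥ 0` (the case `m = 0` being plain
convexity), then for every `x`, `t > 0` and `ε > 0`, the MAP estimate, i.e. the unique
minimizer `u_MAP(x,t)` of `y ↦ ‖x−y‖²/(2t) + J(y)`, and the posterior mean estimate
satisfy `‖u_MAP(x,t) − u_PM(x,t,ε)‖² ≤ ntε/(1 + mt)`. -/
theorem map_postMean_distance_bound (n : ℕ) (hn : 1 ≤ n)
    (J : EuclideanSpace ℝ (Fin n) → EReal)
    (hJ_proper_bot : ∀ y, J y ≠ ⊥)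
    (hJ_lsc : LowerSemicontinuous J)
    (hJ_int : (interior {y : EuclideanSpace ℝ (Fin n) | J y ≠ ⊤}).Nonempty)
    (hJ_inf : (⨅ y : EuclideanSpace ℝ (Fin n), J y) = (0 : EReal))
    (m : ℝ) (hm : 0 ≤ m)
    (hJ_strconv : ∀ y₁ y₂ : EuclideanSpace ℝ (Fin n), ∀ a b : ℝ, 0 ≤ a → 0 ≤ b → a + b = 1 →
      J (a • y₁ + b • y₂)
        ≤ (a : EReal) * J y₁ + (b : EReal) * J y₂
            - (((m / 2 * a * b * ‖y₁ - y₂‖ ^ 2 : ℝ)) : EReal))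
    (x : EuclideanSpace ℝ (Fin n)) (t ε : ℝ) (ht : 0 < t) (hε : 0 < ε) :
    ∃ uMAP : EuclideanSpace ℝ (Fin n),
      (∀ y : EuclideanSpace ℝ (Fin n),
        (((‖x - uMAP‖ ^ 2 / (2 * t) : ℝ)) : EReal) + J uMAP
          ≤ (((‖x - y‖ ^ 2 / (2 * t) : ℝ)) : EReal) + J y) ∧
      (∀ u' : EuclideanSpace ℝ (Fin n),
        (∀ y : EuclideanSpace ℝ (Fin n),
          (((‖x - u'‖ ^ 2 / (2 * t) : ℝ)) : EReal) + J u'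
            ≤ (((‖x - y‖ ^ 2 / (2 * t) : ℝ)) : EReal) + J y) → u' = uMAP) ∧
      ‖uMAP - postMean n J x t ε‖ ^ 2 ≤ n * t * ε / (1 + m * t) :=
  map_postMean_distance_bound_general n J hJ_proper_bot hJ_lsc hJ_int m hJ_strconv x t ε ht
    (by positivity) hε
end
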